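/- arXiv:1308.5041 — 2 statements merged into one kernel-verified Lean document; each statement's English description precedes it below -/
import Mathlib

section
/- Let q be a fixed prime power. Then π_q(q^n)·(q−1)·n/q^{n+1} tends to 1 as n → ∞; equivalently, π_q(q^n) = (q/(q−1))·(q^n/n)·(1 + o(1)). -/
open Polynomial UniqueFactorizationMonoid Filter Topology

section FiniteFieldCount

variable (F : Type*) [Field F] [Fintype F]

theorem separable_X_pow_card_pow_sub_X {n : ℕ} (hn : n ≠ 0) :
    (X ^ Fintype.card F ^ n - X : F[X]).Separable := by
  obtain ⟨p, hp⟩ := CharP.exists F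
  refine galois_poly_separable p _ (dvd_pow ?_ hn)
  rw [← CharP.cast_eq_zero_iff F p, FiniteField.cast_card_eq_zero]

theorem X_pow_card_pow_sub_X_ne_zero {n : ℕ} (hn : n ≠ 0) :
    (X ^ Fintype.card F ^ n - X : F[X]) ≠ 0 :=
  FiniteField.X_pow_card_pow_sub_X_ne_zero F hn Fintype.one_lt_card

open Classical in
/-- The monic irreducible polynomials of degree `n` over a finite field. -/
noncomputable def monicIrreducibles (n : ℕ) : Finset F[X] :=
  (normalizedFactors (X ^ Fintype.card F ^ n - X : F[X])).toFinset.filter (·.natDegree = n)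

variable {F} in
theorem mem_monicIrreducibles {n : ℕ} {f : F[X]} :
    f ∈ monicIrreducibles F n ↔ f.Monic ∧ Irreducible f ∧ f.natDegree = n := by
  classical
  rcases eq_or_ne n 0 with rfl | hn
  · simp only [monicIrreducibles, pow_zero, pow_one, sub_self, normalizedFactors_zero,
      Multiset.toFinset_zero, Finset.filter_empty, Finset.notMem_empty, false_iff]
    exact fun h => h.2.1.natDegree_pos.ne' h.2.2
  · have h0 := X_pow_card_pow_sub_X_ne_zero F hn
    rw [monicIrreducibles, Finset.mem_filter, Multiset.mem_toFinset]
    have key := Polynomial.mem_normalizedFactors_iff (p := f) h0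
    constructor
    · rintro ⟨h, hd⟩
      have := key.1 (by convert h)
      exact ⟨this.2.1, this.1, hd⟩
    · rintro ⟨hm, hi, hd⟩
      refine ⟨?_, hd⟩
      have := key.2 ⟨hi, hm, by
        rw [Fintype.card_eq_nat_card]
        exact hi.natDegree_dvd_iff_dvd_X_pow_card_pow_sub_X.1 hd.dvd⟩
      convert this

theorem sum_divisors_mul_card_monicIrreducibles {n : ℕ} (hn : n ≠ 0) :
    ∑ d ∈ n.divisors, d * (monicIrreducibles F d).card = Fintype.card F ^ n := by
  classical
  set P : F[X] := X ^ Fintype.card F ^ n - X with hP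
  have h0 : P ≠ 0 := X_pow_card_pow_sub_X_ne_zero F hn
  have hmem (f : F[X]) : f ∈ normalizedFactors P ↔ Irreducible f ∧ f.Monic ∧ f.natDegree ∣ n := by
    rw [Polynomial.mem_normalizedFactors_iff h0]
    refine and_congr_right fun hi => and_congr_right fun _ => ?_
    rw [hi.natDegree_dvd_iff_dvd_X_pow_card_pow_sub_X, hP, Fintype.card_eq_nat_card]
  have hnodup : (normalizedFactors P).Nodup :=
    (squarefree_iff_nodup_normalizedFactors h0).1
      (separable_X_pow_card_pow_sub_X F hn).squarefree
  have hdeg : ((normalizedFactors P).map natDegree).sum = Fintype.card F ^ n := by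
    rw [← natDegree_multiset_prod_of_monic _ fun f hf => ((hmem f).1 hf).2.1,
      natDegree_eq_of_degree_eq (degree_eq_degree_of_associated (prod_normalizedFactors h0))]
    exact FiniteField.X_pow_card_pow_sub_X_natDegree_eq F hn Fintype.one_lt_card
  have hsum : ∑ f ∈ (normalizedFactors P).toFinset, f.natDegree = Fintype.card F ^ n := by
    rw [← hdeg, Finset.sum, Multiset.toFinset_val, hnodup.dedup]
  rw [← hsum, ← Finset.sum_fiberwise_of_maps_to (t := n.divisors) (g := natDegree)
    fun f hf => Nat.mem_divisors.2 ⟨((hmem f).1 (Multiset.mem_toFinset.1 hf)).2.2, hn⟩]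
  refine Finset.sum_congr rfl fun d hd => ?_
  have : monicIrreducibles F d = (normalizedFactors P).toFinset.filter (natDegree · = d) := by
    ext f
    rw [mem_monicIrreducibles, Finset.mem_filter, Multiset.mem_toFinset, hmem]
    constructor
    · rintro ⟨hm, hi, rfl⟩
      exact ⟨⟨hi, hm, Nat.dvd_of_mem_divisors hd⟩, rfl⟩
    · rintro ⟨⟨hi, hm, -⟩, hd⟩
      exact ⟨hm, hi, hd⟩
  rw [this, Finset.sum_congr rfl fun f hf => (Finset.mem_filter.1 hf).2]
  simp [mul_comm]

theorem mul_card_monicIrreducibles_le (n : ℕ) :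
    n * (monicIrreducibles F n).card ≤ Fintype.card F ^ n := by
  rcases eq_or_ne n 0 with rfl | hn
  · simp
  rw [← sum_divisors_mul_card_monicIrreducibles F hn]
  exact Finset.single_le_sum (f := fun d => d * (monicIrreducibles F d).card)
    (fun _ _ => Nat.zero_le _) (Nat.mem_divisors_self n hn)

theorem card_pow_le_mul_card_monicIrreducibles_add {n : ℕ} (hn : n ≠ 0) :
    Fintype.card F ^ n ≤ n * (monicIrreducibles F n).card + Fintype.card F ^ (n / 2 + 1) := by
  rw [← sum_divisors_mul_card_monicIrreducibles F hn, ← Nat.insert_self_properDivisors hn,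
    Finset.sum_insert Nat.self_notMem_properDivisors]
  gcongr
  refine (Finset.sum_le_sum fun d _ => mul_card_monicIrreducibles_le F d).trans
    (Nat.geomSum_lt Fintype.one_lt_card fun d hd => ?_).le
  obtain ⟨⟨k, rfl⟩, hlt⟩ := Nat.mem_properDivisors.1 hd
  have hk : 2 ≤ k := by
    by_contra! h
    interval_cases k <;> omega
  rw [Nat.lt_succ_iff, Nat.le_div_iff_mul_le two_pos]
  exact Nat.mul_le_mul_left d hk

theorem tendsto_mul_card_monicIrreducibles_div :
    Tendsto (fun n : ℕ => (n * (monicIrreducibles F n).card : ℝ) / (Fintype.card F : ℝ) ^ n)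
      atTop (𝓝 1) := by
  have hq : (1 : ℝ) < Fintype.card F := by exact_mod_cast Fintype.one_lt_card
  have hlow {n : ℕ} (hn : n ≠ 0) : (Fintype.card F : ℝ) ^ n ≤
      n * (monicIrreducibles F n).card + (Fintype.card F : ℝ) ^ (n / 2 + 1) := by
    exact_mod_cast card_pow_le_mul_card_monicIrreducibles_add F hn
  have hup (n : ℕ) : n * (monicIrreducibles F n).card ≤ (Fintype.card F : ℝ) ^ n := by
    exact_mod_cast mul_card_monicIrreducibles_le F n
  set q : ℝ := ((Fintype.card F : ℕ) : ℝ)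
  have hq0 : 0 < q := by linarith
  have hlim : Tendsto (fun n : ℕ => 1 - q * q⁻¹ ^ (n / 2)) atTop (𝓝 1) := by
    have := (tendsto_pow_atTop_nhds_zero_of_lt_one (inv_nonneg.2 hq0.le)
      (inv_lt_one_of_one_lt₀ hq)).comp (Nat.tendsto_div_const_atTop two_ne_zero)
    simpa using (this.const_mul q).const_sub 1
  refine tendsto_of_tendsto_of_tendsto_of_le_of_le' hlim tendsto_const_nhds ?_ ?_
  · filter_upwards [eventually_ne_atTop 0] with n hn
    rw [le_div_iff₀ (by positivity)]
    have h2 : q ^ (n / 2 + 1) ≤ q * q⁻¹ ^ (n / 2) * q ^ n := by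
      rw [inv_pow, pow_succ', mul_assoc, inv_mul_eq_div]
      gcongr
      rw [le_div_iff₀ (by positivity), ← pow_add]
      exact pow_le_pow_right₀ hq.le (by omega)
    linarith [hlow hn]
  · filter_upwards with n
    exact (div_le_one (by positivity)).2 (hup n)

theorem card_monic_irreducible_natDegree_le (n : ℕ) :
    Nat.card {f : F[X] // f.Monic ∧ Irreducible f ∧ f.natDegree ≤ n} =
      ∑ k ∈ Finset.range n, (monicIrreducibles F (n - k)).card := by
  classical
  rw [← Finset.card_biUnion]
  · refine Nat.subtype_card _ fun f => ?_
    simp only [Finset.mem_biUnion, Finset.mem_range, mem_monicIrreducibles]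
    constructor
    · rintro ⟨k, hk, hm, hi, hd⟩
      exact ⟨hm, hi, by omega⟩
    · rintro ⟨hm, hi, hd⟩
      have := hi.natDegree_pos
      exact ⟨n - f.natDegree, by omega, hm, hi, by omega⟩
  · intro a ha b hb hab
    rw [Function.onFun, Finset.disjoint_left]
    intro f hfa hfb
    rw [mem_monicIrreducibles] at hfa hfb
    simp only [Finset.coe_range, Set.mem_Iio] at ha hb
    omega

end FiniteFieldCount

/-- If `a n ~ q ^ n / n` with `n * a n ≤ q ^ n`, then the partial sums of `a` are asymptotic to
`q ^ (n + 1) / ((q - 1) * n)`. -/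
theorem tendsto_sum_range_mul_div_pow {q : ℝ} (hq : 1 < q) {a : ℕ → ℝ} (ha : ∀ n, 0 ≤ a n)
    (hle : ∀ n, n * a n ≤ q ^ n) (hlim : Tendsto (fun n : ℕ => n * a n / q ^ n) atTop (𝓝 1)) :
    Tendsto (fun n : ℕ => (∑ k ∈ Finset.range n, a (n - k)) * (q - 1) * n / q ^ (n + 1))
      atTop (𝓝 1) := by
  have hq0 : 0 < q := by linarith
  have hr0 : 0 ≤ q⁻¹ := inv_nonneg.2 hq0.le
  have hr1 : q⁻¹ < 1 := inv_lt_one_of_one_lt₀ hq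
  set t : ℕ → ℕ → ℝ := fun n k => if k < n then n * a (n - k) / q ^ n else 0 with ht
  have hbound : Summable fun k : ℕ => ((k : ℝ) + 1) * q⁻¹ ^ k := by
    have hr : ‖q⁻¹‖ < 1 := by rwa [Real.norm_of_nonneg hr0]
    refine ((summable_pow_mul_geometric_of_norm_lt_one 1 hr).add
      (summable_geometric_of_lt_one hr0 hr1)).congr fun k => ?_
    ring
  have hsplit {n k : ℕ} (hk : k < n) : (n : ℝ) * a (n - k) / q ^ n =
      ((n - k : ℕ) * a (n - k) / q ^ (n - k)) * (n / (n - k : ℕ)) * q⁻¹ ^ k := by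
    have hnk : ((n - k : ℕ) : ℝ) ≠ 0 := by
      exact_mod_cast (Nat.sub_pos_of_lt hk).ne'
    have hpow : q ^ n = q ^ (n - k) * q ^ k := by rw [← pow_add, Nat.sub_add_cancel hk.le]
    rw [hpow, inv_pow]
    field_simp
  have hratio (k : ℕ) : Tendsto (fun n : ℕ => (n : ℝ) / (n - k : ℕ)) atTop (𝓝 1) := by
    rw [← tendsto_add_atTop_iff_nat k]
    have h : Tendsto (fun n : ℕ => 1 + (k : ℝ) / n) atTop (𝓝 (1 + 0)) :=
      (tendsto_const_div_atTop_nhds_zero_nat (k : ℝ)).const_add 1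
    rw [add_zero] at h
    refine h.congr' ?_
    filter_upwards [eventually_ne_atTop 0] with n hn
    rw [Nat.add_sub_cancel]
    push_cast
    field_simp
  have hterm (k : ℕ) : Tendsto (fun n => t n k) atTop (𝓝 (q⁻¹ ^ k)) := by
    have h := ((hlim.comp (tendsto_sub_atTop_nat k)).mul (hratio k)).mul_const (q⁻¹ ^ k)
    rw [one_mul, one_mul] at h
    refine h.congr' ?_
    filter_upwards [eventually_gt_atTop k] with n hn
    rw [ht]
    simp only [if_pos hn, hsplit hn, Function.comp_apply]
  have hdom (n k : ℕ) : ‖t n k‖ ≤ ((k : ℝ) + 1) * q⁻¹ ^ k := by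
    rw [ht]
    dsimp only
    split_ifs with hk
    · have hpos : (0 : ℝ) < (n - k : ℕ) := by exact_mod_cast Nat.sub_pos_of_lt hk
      rw [Real.norm_of_nonneg (div_nonneg (mul_nonneg n.cast_nonneg (ha _)) (by positivity)),
        hsplit hk]
      have h1 : (n - k : ℕ) * a (n - k) / q ^ (n - k) ≤ 1 :=
        (div_le_one (by positivity)).2 (hle _)
      have h2 : (n : ℝ) / (n - k : ℕ) ≤ k + 1 := by
        rw [div_le_iff₀ hpos]
        obtain ⟨m, rfl⟩ := Nat.exists_eq_add_of_lt hk
        have : k + m + 1 - k = m + 1 := by omega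
        rw [this]
        push_cast
        nlinarith [mul_nonneg (Nat.cast_nonneg (α := ℝ) k) (Nat.cast_nonneg (α := ℝ) m)]
      gcongr
      exact (mul_le_of_le_one_left (by positivity) h1).trans h2
    · rw [norm_zero]
      positivity
  have hmain := (tendsto_tsum_of_dominated_convergence hbound hterm
    (Eventually.of_forall hdom)).mul_const ((q - 1) / q)
  have hval : (∑' k : ℕ, q⁻¹ ^ k) * ((q - 1) / q) = 1 := by
    have : q - 1 ≠ 0 := by linarith
    rw [tsum_geometric_of_lt_one hr0 hr1]
    field_simp
  rw [hval] at hmain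
  refine hmain.congr fun n => ?_
  rw [tsum_eq_sum (s := Finset.range n) fun k hk => if_neg (by simpa using hk),
    Finset.sum_congr rfl fun k hk => if_pos (Finset.mem_range.1 hk), ← Finset.sum_div,
    ← Finset.mul_sum, pow_succ]
  field_simp

theorem stmt_2 (q : ℕ) (hq : IsPrimePow q) (F : Type*) [Field F] [Fintype F]
    (hF : Fintype.card F = q) :
    Filter.Tendsto
      (fun n : ℕ =>
        (Nat.card {f : Polynomial F // f.Monic ∧ Irreducible f ∧ f.natDegree ≤ n} : ℝ) *
          (q - 1) * n / (q : ℝ) ^ (n + 1))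
      Filter.atTop (nhds 1) := by
  subst hF
  simp only [card_monic_irreducible_natDegree_le, Nat.cast_sum]
  exact tendsto_sum_range_mul_div_pow (a := fun n => ((monicIrreducibles F n).card : ℝ))
    (by exact_mod_cast hq.one_lt) (fun n => Nat.cast_nonneg _)
    (fun n => by exact_mod_cast mul_card_monicIrreducibles_le F n)
    (tendsto_mul_card_monicIrreducibles_div F)
end

section
/- For all real q ≥ 2 and all integers n ≥ 1 and m ≥ 1, one has |∑_{k=1}^{n} q^k/k − q^{n+1}/((q−1)·n) − ∑_{j=1}^{m−1} (q^n/n^{j+1})·∑_{i=0}^{j} (−1)^{j−i}·i!·S(j,i)·q^i/(q−1)^{i+1}| ≤ 3^{m+3}·m!·q^{n−1}/n^{m+1} + 2^{m+1}·m!/n. -/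
/-- The Stirling numbers of the second kind: `stirling2 n k` is the number of
partitions of a set with `n` elements into `k` nonempty blocks. -/
def stirling2 : ℕ → ℕ → ℕ
  | 0, 0 => 1
  | 0, _ + 1 => 0
  | _ + 1, 0 => 0
  | n + 1, k + 1 => (k + 1) * stirling2 n (k + 1) + stirling2 n k

theorem stirling2_eq_zero_of_lt : ∀ {n k : ℕ}, n < k → stirling2 n k = 0
  | 0, _ + 1, _ => by rw [stirling2]
  | n + 1, k + 1, hk => by
    rw [stirling2, stirling2_eq_zero_of_lt (Nat.lt_of_succ_lt_succ hk),
      stirling2_eq_zero_of_lt (Nat.lt_of_succ_lt hk), mul_zero]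

/-- Expansion of a power in rising factorials. -/
theorem succ_pow_eq_sum_stirling2_mul_ascFactorial (t j : ℕ) :
    ((t : ℝ) + 1) ^ j = ∑ i ∈ Finset.range (j + 1),
      (-1 : ℝ) ^ (j - i) * stirling2 j i * (t + 1).ascFactorial i := by
  induction j with
  | zero => simp [stirling2]
  | succ j ih =>
    have hR : ∀ i : ℕ, (((t + 1).ascFactorial (i + 1) : ℕ) : ℝ) =
        (t + 1 + i) * (t + 1).ascFactorial i := by
      intro i
      rw [Nat.ascFactorial_succ]
      push_cast
      ring
    have hlow : ∑ i ∈ Finset.range (j + 1), (-1 : ℝ) ^ (j - i) * stirling2 j i *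
          (i * (t + 1).ascFactorial i) =
        -∑ i ∈ Finset.range (j + 1), (-1 : ℝ) ^ (j - i) *
          ((i + 1) * stirling2 j (i + 1)) * (t + 1).ascFactorial (i + 1) := by
      rw [Finset.sum_range_succ', Finset.sum_range_succ _ j,
        stirling2_eq_zero_of_lt (Nat.lt_succ_self j)]
      simp only [Nat.cast_zero, zero_mul, mul_zero, add_zero]
      rw [← Finset.sum_neg_distrib]
      refine Finset.sum_congr rfl fun i hi => ?_
      obtain ⟨d, rfl⟩ : ∃ d, j = i + 1 + d :=
        Nat.exists_eq_add_of_lt (Finset.mem_range.1 hi) |>.imp fun d hd => by omega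
      rw [show i + 1 + d - (i + 1) = d by omega, show i + 1 + d - i = d + 1 by omega]
      push_cast
      ring
    rw [pow_succ, ih, Finset.sum_range_succ' _ (j + 1)]
    have hsplit : (∑ i ∈ Finset.range (j + 1),
          (-1 : ℝ) ^ (j - i) * stirling2 j i * (t + 1).ascFactorial i) * ((t : ℝ) + 1) =
        ∑ i ∈ Finset.range (j + 1),
          (-1 : ℝ) ^ (j - i) * stirling2 j i * (t + 1).ascFactorial (i + 1) -
        ∑ i ∈ Finset.range (j + 1), (-1 : ℝ) ^ (j - i) * stirling2 j i *
          (i * (t + 1).ascFactorial i) := by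
      rw [Finset.sum_mul, ← Finset.sum_sub_distrib]
      refine Finset.sum_congr rfl fun i _ => ?_
      rw [hR]
      ring
    rw [hsplit, hlow, sub_neg_eq_add, ← Finset.sum_add_distrib]
    simp only [stirling2, Nat.cast_zero, mul_zero, zero_mul, add_zero, Nat.add_sub_add_right]
    refine Finset.sum_congr rfl fun i _ => ?_
    push_cast
    ring

theorem hasSum_ascFactorial_mul_geometric (k : ℕ) {r : ℝ} (hr : ‖r‖ < 1) :
    HasSum (fun t : ℕ => ((t + 1).ascFactorial k : ℝ) * r ^ t)
      (k.factorial * (1 / (1 - r) ^ (k + 1))) := by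
  refine ((hasSum_choose_mul_geometric_of_norm_lt_one k hr).mul_left (k.factorial : ℝ)).congr_fun
    fun t => ?_
  rw [Nat.ascFactorial_eq_factorial_mul_choose]
  push_cast
  ring

theorem hasSum_ascFactorial_mul_half_pow (k : ℕ) :
    HasSum (fun t : ℕ => ((t + 1).ascFactorial k : ℝ) * (1 / 2) ^ t)
      (k.factorial * 2 ^ (k + 1)) := by
  convert hasSum_ascFactorial_mul_geometric k (r := (1 / 2 : ℝ)) (by norm_num) using 2
  rw [show (1 : ℝ) - 1 / 2 = 1 / 2 by norm_num, one_div_pow, one_div_one_div]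

theorem hasSum_succ_pow_mul_inv_pow {q : ℝ} (hq : 1 < q) (j : ℕ) :
    HasSum (fun t : ℕ => ((t : ℝ) + 1) ^ j * q⁻¹ ^ (t + 1))
      (∑ i ∈ Finset.range (j + 1), (-1 : ℝ) ^ (j - i) * (Nat.factorial i) * (stirling2 j i) *
        q ^ i / (q - 1) ^ (i + 1)) := by
  have hq0 : 0 < q := by linarith
  have hr : ‖q⁻¹‖ < 1 := by
    rw [Real.norm_of_nonneg (by positivity)]
    exact inv_lt_one_of_one_lt₀ hq
  have key := hasSum_sum (s := Finset.range (j + 1)) fun i _ =>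
    (hasSum_ascFactorial_mul_geometric i hr).mul_left ((-1 : ℝ) ^ (j - i) * stirling2 j i * q⁻¹)
  convert key using 1
  · rfl
  · funext t
    rw [succ_pow_eq_sum_stirling2_mul_ascFactorial, Finset.sum_mul]
    refine Finset.sum_congr rfl fun i _ => ?_
    ring
  · refine Finset.sum_congr rfl fun i _ => ?_
    have h1 : q - 1 ≠ 0 := by linarith
    rw [show 1 - q⁻¹ = (q - 1) / q by field_simp, div_pow]
    field_simp
    ring

theorem add_two_mul_succ_pow_le_ascFactorial (t m : ℕ) (hm : 1 ≤ m) :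
    (t + 2) * (t + 1) ^ m ≤ (t + 1).ascFactorial (m + 1) := by
  induction m, hm using Nat.le_induction with
  | base => simp [Nat.ascFactorial_succ]
  | succ m _ ih =>
    rw [Nat.ascFactorial_succ, pow_succ, ← mul_assoc, mul_comm]
    exact Nat.mul_le_mul (by omega) ih

theorem sum_factorial_mul_two_pow_le (m : ℕ) :
    ∑ j ∈ Finset.range m, (j.factorial : ℝ) * 2 ^ (j + 1) ≤ m.factorial * 2 ^ (m + 1) := by
  induction m with
  | zero => simp
  | succ m ih =>
    rw [Finset.sum_range_succ]
    have h : (m.factorial : ℝ) ≤ (m + 1).factorial := by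
      exact_mod_cast Nat.factorial_le (Nat.le_succ m)
    calc _ ≤ (m.factorial : ℝ) * 2 ^ (m + 1) + m.factorial * 2 ^ (m + 1) := by gcongr
      _ = m.factorial * 2 ^ (m + 1 + 1) := by ring
      _ ≤ _ := by gcongr

theorem succ_mul_two_pow_le_three_pow (m : ℕ) : (m + 1) * 2 ^ (m + 2) ≤ 3 ^ (m + 3) := by
  induction m with
  | zero => norm_num
  | succ m ih =>
    have h : 2 ^ (m + 2) * 1 ≤ 3 ^ (m + 2) * 1 := by gcongr; norm_num
    calc (m + 1 + 1) * 2 ^ (m + 1 + 2)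
        = 2 * ((m + 1) * 2 ^ (m + 2)) + 2 * 2 ^ (m + 2) := by ring
      _ ≤ 2 * 3 ^ (m + 3) + 2 * 3 ^ (m + 2) := by omega
      _ ≤ 3 ^ (m + 1 + 3) := by
        rw [show 3 ^ (m + 1 + 3) = 9 * 3 ^ (m + 2) by ring,
          show 3 ^ (m + 3) = 3 * 3 ^ (m + 2) by ring]
        omega

theorem one_div_sub_geom_sum (l d : ℝ) (hl : 0 < l) (hd : 0 < d) (m : ℕ) :
    1 / d - ∑ j ∈ Finset.range m, l ^ j / (l + d) ^ (j + 1) = l ^ m / ((l + d) ^ m * d) := by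
  induction m with
  | zero => simp
  | succ m ih =>
    rw [Finset.sum_range_succ, ← sub_sub, ih]
    field_simp
    ring

theorem sum_Icc_pow_div_eq (q : ℝ) (N : ℕ) :
    ∑ k ∈ Finset.Icc 1 (N + 1), q ^ k / k =
      q ^ (N + 1) / (N + 1 : ℕ) + ∑ t ∈ Finset.range N, q ^ (N - t) / (N - t : ℕ) := by
  rw [Finset.sum_Icc_succ_top (by omega), add_comm, add_right_inj, Finset.range_eq_Ico,
    Finset.sum_Ico_reflect (fun k => q ^ k / (k : ℝ)) 0 (Nat.le_succ N)]
  refine Finset.sum_congr ?_ fun _ _ => rfl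
  ext k
  simp only [Finset.mem_Icc, Finset.mem_Ico]
  omega

/-- Bound for the part of the remainder coming from the terms of the original sum. -/
theorem sum_remainder_le {q : ℝ} (hq : 2 ≤ q) (N m : ℕ) (hm : 1 ≤ m) :
    ∑ t ∈ Finset.range N,
        q ^ (N - t) * (((t : ℝ) + 1) ^ m / (((N + 1 : ℕ) : ℝ) ^ m * (N - t : ℕ))) ≤
      3 ^ (m + 3) * m.factorial * q ^ N / ((N + 1 : ℕ) : ℝ) ^ (m + 1) := by
  have hterm : ∀ t ∈ Finset.range N,
      q ^ (N - t) * (((t : ℝ) + 1) ^ m / (((N + 1 : ℕ) : ℝ) ^ m * (N - t : ℕ))) ≤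
        q ^ N / ((N + 1 : ℕ) : ℝ) ^ (m + 1) *
          (((t + 1).ascFactorial (m + 1) : ℝ) * (1 / 2) ^ t) := by
    intro t ht
    obtain ⟨d, rfl⟩ : ∃ d, N = t + (d + 1) :=
      Nat.exists_eq_add_of_lt (Finset.mem_range.1 ht) |>.imp fun d hd => by omega
    rw [show t + (d + 1) - t = d + 1 by omega]
    have hasc : ((t : ℝ) + 2) * (t + 1) ^ m ≤ ((t + 1).ascFactorial (m + 1) : ℝ) := by
      exact_mod_cast add_two_mul_succ_pow_le_ascFactorial t m hm
    have hpow : q ^ (d + 1) ≤ q ^ (t + (d + 1)) * (1 / 2) ^ t := by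
      rw [pow_add q t, mul_right_comm, ← mul_pow]
      exact le_mul_of_one_le_left (by positivity) (one_le_pow₀ (by linarith))
    have hfrac : ((t : ℝ) + 1) ^ m / (((t + (d + 1) + 1 : ℕ) : ℝ) ^ m * (d + 1 : ℕ)) ≤
        ((t + 1).ascFactorial (m + 1) : ℝ) / ((t + (d + 1) + 1 : ℕ) : ℝ) ^ (m + 1) := by
      rw [div_le_div_iff₀ (by positivity) (by positivity), pow_succ]
      have hn : ((t + (d + 1) + 1 : ℕ) : ℝ) ≤ (t + 2) * (d + 1 : ℕ) := by
        push_cast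
        nlinarith [mul_nonneg (Nat.cast_nonneg (α := ℝ) t) (Nat.cast_nonneg (α := ℝ) d)]
      calc ((t : ℝ) + 1) ^ m *
            (((t + (d + 1) + 1 : ℕ) : ℝ) ^ m * ((t + (d + 1) + 1 : ℕ) : ℝ))
          ≤ ((t : ℝ) + 1) ^ m * (((t + (d + 1) + 1 : ℕ) : ℝ) ^ m * ((t + 2) * (d + 1 : ℕ))) := by
            gcongr
        _ = (((t : ℝ) + 2) * (t + 1) ^ m) * (((t + (d + 1) + 1 : ℕ) : ℝ) ^ m * (d + 1 : ℕ)) := by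
            ring
        _ ≤ _ := by gcongr
    calc _ ≤ (q ^ (t + (d + 1)) * (1 / 2) ^ t) *
          (((t + 1).ascFactorial (m + 1) : ℝ) / ((t + (d + 1) + 1 : ℕ) : ℝ) ^ (m + 1)) := by
          gcongr
      _ = _ := by ring
  have hsum := hasSum_ascFactorial_mul_half_pow (m + 1)
  have hpart : ∑ t ∈ Finset.range N, ((t + 1).ascFactorial (m + 1) : ℝ) * (1 / 2) ^ t ≤
      (m + 1).factorial * 2 ^ (m + 2) :=
    sum_le_hasSum _ (fun _ _ => by positivity) hsum
  have hconst : ((m + 1).factorial : ℝ) * 2 ^ (m + 2) ≤ 3 ^ (m + 3) * m.factorial := by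
    have h := Nat.mul_le_mul_right m.factorial (succ_mul_two_pow_le_three_pow m)
    rw [Nat.factorial_succ]
    calc (((m + 1) * m.factorial : ℕ) : ℝ) * 2 ^ (m + 2)
        = (((m + 1) * 2 ^ (m + 2) * m.factorial : ℕ) : ℝ) := by push_cast; ring
      _ ≤ ((3 ^ (m + 3) * m.factorial : ℕ) : ℝ) := by exact_mod_cast h
      _ = _ := by push_cast; ring
  calc _ ≤ ∑ t ∈ Finset.range N, q ^ N / ((N + 1 : ℕ) : ℝ) ^ (m + 1) *
        (((t + 1).ascFactorial (m + 1) : ℝ) * (1 / 2) ^ t) := Finset.sum_le_sum hterm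
    _ ≤ q ^ N / ((N + 1 : ℕ) : ℝ) ^ (m + 1) * (3 ^ (m + 3) * m.factorial) := by
      rw [← Finset.mul_sum]
      gcongr
      exact hpart.trans hconst
    _ = _ := by ring

/-- Bound for the tail of the series completing the finite sum. -/
theorem tail_le {q : ℝ} (hq : 2 ≤ q) (N m : ℕ) {T : ℝ}
    (hT : HasSum (fun s : ℕ => ∑ j ∈ Finset.range m, q ^ (N + 1) / ((N + 1 : ℕ) : ℝ) ^ (j + 1) *
      ((((s + N : ℕ) : ℝ) + 1) ^ j * q⁻¹ ^ (s + N + 1))) T) :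
    T ≤ 2 ^ (m + 1) * m.factorial / (N + 1 : ℕ) := by
  have hq0 : 0 < q := by linarith
  have hbound := (hasSum_sum (s := Finset.range m) fun j _ =>
    hasSum_ascFactorial_mul_half_pow j).mul_left (1 / ((N + 1 : ℕ) : ℝ))
  have hle : T ≤ 1 / ((N + 1 : ℕ) : ℝ) *
      ∑ j ∈ Finset.range m, (j.factorial : ℝ) * 2 ^ (j + 1) := by
    refine hasSum_le (fun s => ?_) hT hbound
    rw [Finset.mul_sum]
    refine Finset.sum_le_sum fun j _ => ?_
    have hbase : (((s + N : ℕ) : ℝ) + 1) / ((N + 1 : ℕ) : ℝ) ≤ s + 1 := by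
      rw [div_le_iff₀ (by positivity)]
      push_cast
      nlinarith [mul_nonneg (Nat.cast_nonneg (α := ℝ) s) (Nat.cast_nonneg (α := ℝ) N)]
    have hasc : ((s : ℝ) + 1) ^ j ≤ ((s + 1).ascFactorial j : ℝ) := by
      exact_mod_cast Nat.pow_succ_le_ascFactorial (s + 1) j
    have hinv : q⁻¹ ≤ 1 / 2 := by
      rw [inv_eq_one_div]
      gcongr
    have hcancel : q ^ (N + 1) * q⁻¹ ^ (s + N + 1) = q⁻¹ ^ s := by
      rw [add_assoc, pow_add q⁻¹, mul_left_comm, ← mul_pow, mul_inv_cancel₀ hq0.ne', one_pow, mul_one]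
    calc q ^ (N + 1) / ((N + 1 : ℕ) : ℝ) ^ (j + 1) *
          ((((s + N : ℕ) : ℝ) + 1) ^ j * q⁻¹ ^ (s + N + 1))
        = (q ^ (N + 1) * q⁻¹ ^ (s + N + 1)) * (1 / ((N + 1 : ℕ) : ℝ) *
          ((((s + N : ℕ) : ℝ) + 1) / ((N + 1 : ℕ) : ℝ)) ^ j) := by
          rw [div_pow]
          ring
      _ = 1 / ((N + 1 : ℕ) : ℝ) *
          (((((s + N : ℕ) : ℝ) + 1) / ((N + 1 : ℕ) : ℝ)) ^ j * q⁻¹ ^ s) := by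
          rw [hcancel]
          ring
      _ ≤ 1 / ((N + 1 : ℕ) : ℝ) * (((s : ℝ) + 1) ^ j * (1 / 2) ^ s) := by gcongr
      _ ≤ _ := by gcongr
  calc T ≤ _ := hle
    _ ≤ 1 / ((N + 1 : ℕ) : ℝ) * (m.factorial * 2 ^ (m + 1)) := by
      gcongr
      exact sum_factorial_mul_two_pow_le m
    _ = _ := by ring

theorem stmt_15 (q : ℝ) (hq : 2 ≤ q) (n m : ℕ) (hn : 1 ≤ n) (hm : 1 ≤ m) :
    |∑ k ∈ Finset.Icc 1 n, q ^ k / k - q ^ (n + 1) / ((q - 1) * n) -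
        ∑ j ∈ Finset.Icc 1 (m - 1), (q ^ n / (n : ℝ) ^ (j + 1)) *
          ∑ i ∈ Finset.range (j + 1),
            (-1 : ℝ) ^ (j - i) * (Nat.factorial i) * (stirling2 j i) *
              q ^ i / (q - 1) ^ (i + 1)| ≤
      3 ^ (m + 3) * (Nat.factorial m) * q ^ (n - 1) / (n : ℝ) ^ (m + 1) +
        2 ^ (m + 1) * (Nat.factorial m) / n := by
  obtain ⟨N, rfl⟩ : ∃ N, n = N + 1 := ⟨n - 1, by omega⟩
  have hq0 : 0 < q := by linarith
  have hq1 : q - 1 ≠ 0 := by linarith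
  set B : ℕ → ℝ := fun j => ∑ i ∈ Finset.range (j + 1),
    (-1 : ℝ) ^ (j - i) * (Nat.factorial i) * (stirling2 j i) * q ^ i / (q - 1) ^ (i + 1) with hB
  set F : ℕ → ℝ := fun t => ∑ j ∈ Finset.range m, q ^ (N + 1) / ((N + 1 : ℕ) : ℝ) ^ (j + 1) *
    (((t : ℝ) + 1) ^ j * q⁻¹ ^ (t + 1)) with hF
  have hsum : HasSum F
      (∑ j ∈ Finset.range m, q ^ (N + 1) / ((N + 1 : ℕ) : ℝ) ^ (j + 1) * B j) :=
    hasSum_sum fun j _ => (hasSum_succ_pow_mul_inv_pow (by linarith) j).mul_left _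
  have hmain : q ^ (N + 1 + 1) / ((q - 1) * (N + 1 : ℕ)) +
      ∑ j ∈ Finset.Icc 1 (m - 1), q ^ (N + 1) / ((N + 1 : ℕ) : ℝ) ^ (j + 1) * B j =
      q ^ (N + 1) / (N + 1 : ℕ) +
        ∑ j ∈ Finset.range m, q ^ (N + 1) / ((N + 1 : ℕ) : ℝ) ^ (j + 1) * B j := by
    have hset : Finset.Icc 1 (m - 1) = Finset.Ico 1 m := by
      ext k
      simp only [Finset.mem_Icc, Finset.mem_Ico]
      omega
    have hB0 : B 0 = 1 / (q - 1) := by simp [hB, stirling2]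
    rw [hset, Finset.range_eq_Ico, Finset.sum_eq_sum_Ico_succ_bot (by omega : 0 < m), hB0,
      ← add_assoc]
    congr 1
    have : ((N + 1 : ℕ) : ℝ) ≠ 0 := by positivity
    field_simp
    ring
  set P := ∑ t ∈ Finset.range N, F t with hP
  set T := (∑ j ∈ Finset.range m, q ^ (N + 1) / ((N + 1 : ℕ) : ℝ) ^ (j + 1) * B j) - P with hT
  have htail : HasSum (fun s => F (s + N)) T := (hasSum_nat_add_iff' N).2 hsum
  have hT0 : 0 ≤ T := htail.nonneg fun s => by positivity
  have hTle := tail_le hq N m htail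
  have hrem : ∑ t ∈ Finset.range N, q ^ (N - t) / (N - t : ℕ) - P =
      ∑ t ∈ Finset.range N,
        q ^ (N - t) * (((t : ℝ) + 1) ^ m / (((N + 1 : ℕ) : ℝ) ^ m * (N - t : ℕ))) := by
    rw [hP, ← Finset.sum_sub_distrib]
    refine Finset.sum_congr rfl fun t ht => ?_
    obtain ⟨d, rfl⟩ : ∃ d, N = t + (d + 1) :=
      Nat.exists_eq_add_of_lt (Finset.mem_range.1 ht) |>.imp fun d hd => by omega
    have hcancel : q ^ (t + (d + 1) + 1) * q⁻¹ ^ (t + 1) = q ^ (d + 1) := by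
      rw [show t + (d + 1) + 1 = d + 1 + (t + 1) by omega, pow_add, mul_assoc, ← mul_pow,
        mul_inv_cancel₀ hq0.ne', one_pow, mul_one]
    have hcast : ((t + (d + 1) + 1 : ℕ) : ℝ) = (t + 1 : ℝ) + (d + 1 : ℕ) := by
      push_cast
      ring
    rw [show t + (d + 1) - t = d + 1 by omega, hcast,
      ← one_div_sub_geom_sum _ _ (by positivity) (by positivity), mul_sub, Finset.mul_sum,
      mul_one_div]
    congr 1
    simp only [hF]
    refine Finset.sum_congr rfl fun j _ => ?_
    rw [← hcancel, hcast]
    ring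
  have hR0 : 0 ≤ ∑ t ∈ Finset.range N, q ^ (N - t) / (N - t : ℕ) - P := by
    rw [hrem]
    positivity
  have hRle := sum_remainder_le hq N m hm
  rw [← hrem] at hRle
  rw [sub_sub, hmain, sum_Icc_pow_div_eq, Nat.add_sub_cancel, abs_le]
  constructor <;> linarith
end
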